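/- The set 𝒞 of all compact connected metric spaces is path-connected as a subspace of the Gromov–Hausdorff space, and every nonempty open subset of 𝒞 (in the subspace topology) has infinite covering dimension. -/

import Mathlib

open GromovHausdorff

/-- A topological space has covering dimension at most `n` if every open cover
admits an open refinement that still covers the space and in which every point
lies in at most `n + 1` members of the refinement. -/
def CovDimLE (X : Type*) [TopologicalSpace X] (n : ℕ) : Prop :=
  ∀ U : Set (Set X), (∀ u ∈ U, IsOpen u) → ⋃₀ U = Set.univ →
    ∃ V : Set (Set X), (∀ w ∈ V, IsOpen w) ∧ ⋃₀ V = Set.univ ∧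
      (∀ w ∈ V, ∃ u ∈ U, w ⊆ u) ∧
      ∀ x : X, {w ∈ V | x ∈ w}.encard ≤ (n : ℕ∞) + 1

/-- The subset `𝒞` of the Gromov–Hausdorff space consisting of (isometry
classes of) connected compact metric spaces. -/
def GHConnected : Set GHSpace := {p | ConnectedSpace p.Rep}


namespace KuhnSperner

open Finset

/-- The `j`-th vertex of the Kuhn simplex with base point `b` and order `τ`. -/
def vtx {N : ℕ} (b τ : Fin N → ℕ) (j : ℕ) : Fin N → ℕ :=
  fun i => b i + if τ i < j then 1 else 0

/-- The Kuhn simplices of the grid. -/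
def kSimplices (N m : ℕ) : Finset ((Fin N → ℕ) × (Fin N → ℕ)) :=
  (Fintype.piFinset (fun _ => range m) ×ˢ Fintype.piFinset (fun _ => range N)).filter
    (fun p => Function.Injective p.2)

def Door {N : ℕ} (l : (Fin N → ℕ) → ℕ) (p : (Fin N → ℕ) × (Fin N → ℕ)) (k : ℕ) : Prop :=
  ((range (N + 1)).erase k).image (fun j => l (vtx p.1 p.2 j)) = range N

def Full {N : ℕ} (l : (Fin N → ℕ) → ℕ) (p : (Fin N → ℕ) × (Fin N → ℕ)) : Prop :=
  (range (N + 1)).image (fun j => l (vtx p.1 p.2 j)) = range (N + 1)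

open Classical in
theorem count_doors (N : ℕ) (f : ℕ → ℕ) (hf : ∀ j, f j ≤ N) :
    ∑ k ∈ range (N + 1), (if ((range (N + 1)).erase k).image f = range N then (1 : ZMod 2) else 0)
      = if (range (N + 1)).image f = range (N + 1) then 1 else 0 := by
  have inj : ∀ k ∈ range (N + 1), ((range (N + 1)).erase k).image f = range N →
      Set.InjOn f ((range (N + 1)).erase k) := by
    intro k hk h
    apply Finset.injOn_of_card_image_eq
    rw [h, card_erase_of_mem hk]; simp
  split_ifs with h
  · have hinj : Set.InjOn f (range (N + 1)) := by
      apply Finset.injOn_of_card_image_eq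
      rw [h]
    have : N ∈ (range (N + 1)).image f := by rw [h]; simp
    obtain ⟨k, hk, hkN⟩ := mem_image.1 this
    rw [Finset.sum_eq_single k]
    · rw [if_pos]
      ext y
      constructor
      · intro hy
        obtain ⟨j, hj, rfl⟩ := mem_image.1 hy
        have h1 := hf j
        have : f j ≠ N := by
          intro h2
          exact (mem_erase.1 hj).1 (hinj (by simpa using (mem_erase.1 hj).2) (by simpa using hk) (h2.trans hkN.symm))
        simp; omega
      · intro hy
        have hy' : y ∈ (range (N + 1)).image f := by rw [h]; simp at hy ⊢; omega
        obtain ⟨j, hj, rfl⟩ := mem_image.1 hy'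
        refine mem_image.2 ⟨j, mem_erase.2 ⟨?_, hj⟩, rfl⟩
        rintro rfl
        simp at hy; omega
    · intro j hj hjk
      rw [if_neg]
      intro h2
      have : f k ∈ range N := by
        rw [← h2]; exact mem_image_of_mem _ (mem_erase.2 ⟨hjk.symm, hk⟩)
      simp at this; omega
    · intro h2; exact absurd hk h2
  · by_cases hd : ∃ k ∈ range (N + 1), ((range (N + 1)).erase k).image f = range N
    · obtain ⟨k, hk, hd⟩ := hd
      have hkN : f k ≠ N := by
        intro h2
        apply h
        rw [← insert_erase hk, image_insert, hd, h2, insert_erase hk, range_add_one]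
      have hkm : f k ∈ range N := by have := hf k; simp; omega
      have hkm' := hkm
      rw [← hd] at hkm'
      obtain ⟨k1, hk1, hk1f⟩ := mem_image.1 hkm'
      obtain ⟨hne, hk1r⟩ := mem_erase.1 hk1
      have hd1 : ((range (N + 1)).erase k1).image f = range N := by
        rw [← hd]
        ext y
        simp only [mem_image, mem_erase]
        constructor
        · rintro ⟨a, ⟨ha, ha'⟩, rfl⟩
          by_cases hak : a = k
          · exact ⟨k1, ⟨hne, hk1r⟩, by rw [hk1f, hak]⟩
          · exact ⟨a, ⟨hak, ha'⟩, rfl⟩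
        · rintro ⟨a, ⟨ha, ha'⟩, rfl⟩
          by_cases hak : a = k1
          · exact ⟨k, ⟨hne.symm, hk⟩, by rw [← hk1f, hak]⟩
          · exact ⟨a, ⟨hak, ha'⟩, rfl⟩
      rw [← Finset.sum_subset (s₁ := {k, k1})]
      · rw [sum_pair hne.symm, if_pos hd, if_pos hd1]; rfl
      · intro x hx
        rcases mem_insert.1 hx with rfl | hx
        · exact hk
        · rw [mem_singleton.1 hx]; exact hk1r
      · intro x hx hx'
        simp only [mem_insert, mem_singleton, not_or] at hx'
        rw [if_neg]
        intro h3
        have := inj x hx h3 (mem_coe.2 (mem_erase.2 ⟨fun h => hx'.1 h.symm, hk⟩))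
          (mem_coe.2 (mem_erase.2 ⟨fun h => hx'.2 h.symm, hk1r⟩)) hk1f.symm
        exact hne this.symm
    · push Not at hd
      apply Finset.sum_eq_zero
      intro k hk
      rw [if_neg (hd k hk)]

theorem mem_kSimplices {N m : ℕ} {p : (Fin N → ℕ) × (Fin N → ℕ)} :
    p ∈ kSimplices N m ↔ (∀ i, p.1 i < m) ∧ (∀ i, p.2 i < N) ∧ Function.Injective p.2 := by
  simp [kSimplices, Fintype.mem_piFinset, and_assoc]

open Classical in
theorem inner_cancel {N m : ℕ} (l : (Fin N → ℕ) → ℕ) (k : ℕ) (hk : 0 < k) (hkN : k < N) :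
    ∑ p ∈ kSimplices N m, (if Door l p k then (1 : ZMod 2) else 0) = 0 := by
  have key : ∀ p : (Fin N → ℕ) × (Fin N → ℕ),
      Door l (p.1, fun i => Equiv.swap (k - 1) k (p.2 i)) k ↔ Door l p k := by
    intro p
    unfold Door
    have : ((range (N + 1)).erase k).image
        (fun j => l (vtx p.1 (fun i => Equiv.swap (k - 1) k (p.2 i)) j))
        = ((range (N + 1)).erase k).image (fun j => l (vtx p.1 p.2 j)) := by
      apply image_congr
      intro j hj
      have hjk : j ≠ k := by
        have : j ∈ (range (N + 1)).erase k := hj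
        exact (mem_erase.1 this).1
      simp only
      congr 1
      funext i
      simp only [vtx]
      congr 2
      rw [Equiv.swap_apply_def]
      split_ifs <;> simp <;> omega
    rw [this]
  refine Finset.sum_involution (fun p _ => (p.1, fun i => Equiv.swap (k - 1) k (p.2 i))) ?_ ?_ ?_ ?_
  · intro p hp
    rw [if_congr (key p) rfl rfl]
    split_ifs <;> decide
  · intro p hp _ h
    obtain ⟨-, h2, h3⟩ := mem_kSimplices.1 hp
    -- some coordinate has position `k`
    have hs : Function.Surjective (fun i => (⟨p.2 i, h2 i⟩ : Fin N)) := by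
      apply Finite.surjective_of_injective
      intro a b hab
      exact h3 (by simpa using hab)
    obtain ⟨i, hi⟩ := hs ⟨k, hkN⟩
    have hi' : p.2 i = k := by simpa using hi
    have h4 := congrFun (congrArg Prod.snd h) i
    simp [hi'] at h4
    omega
  · intro p hp
    obtain ⟨h1, h2, h3⟩ := mem_kSimplices.1 hp
    refine mem_kSimplices.2 ⟨h1, fun i => ?_, ?_⟩
    · have := h2 i
      simp only [Equiv.swap_apply_def]
      split_ifs <;> omega
    · exact (Equiv.injective _).comp h3
  · intro p hp
    simp

open Classical in
theorem outer_match {n m : ℕ} (l : (Fin (n + 1) → ℕ) → ℕ) :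
    ∑ p ∈ (kSimplices (n + 1) m).filter (fun p => ∀ i, p.2 i = 0 → p.1 i + 1 < m),
        (if Door l p 0 then (1 : ZMod 2) else 0)
      = ∑ p ∈ (kSimplices (n + 1) m).filter (fun p => ∀ i, p.2 i = n → 0 < p.1 i),
        (if Door l p (n + 1) then (1 : ZMod 2) else 0) := by
  refine Finset.sum_bij'
    (fun p _ => (fun i => if p.2 i = 0 then p.1 i + 1 else p.1 i,
      fun i => if p.2 i = 0 then n else p.2 i - 1))
    (fun p _ => (fun i => if p.2 i = n then p.1 i - 1 else p.1 i,
      fun i => if p.2 i = n then 0 else p.2 i + 1)) ?_ ?_ ?_ ?_ ?_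
  · intro p hp
    obtain ⟨hp, hP⟩ := mem_filter.1 hp
    obtain ⟨h1, h2, h3⟩ := mem_kSimplices.1 hp
    refine mem_filter.2 ⟨mem_kSimplices.2 ⟨fun i => ?_, fun i => ?_, fun a b hab => ?_⟩, fun i hi => ?_⟩
    · have := h1 i; have := hP i
      dsimp only; split_ifs <;> grind
    · have := h2 i
      dsimp only; split_ifs <;> omega
    · have := h2 a; have := h2 b
      apply h3
      dsimp only at hab
      split_ifs at hab <;> omega
    · have := h2 i
      dsimp only at hi ⊢
      split_ifs at hi ⊢ <;> omega
  · intro p hp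
    obtain ⟨hp, hP⟩ := mem_filter.1 hp
    obtain ⟨h1, h2, h3⟩ := mem_kSimplices.1 hp
    refine mem_filter.2 ⟨mem_kSimplices.2 ⟨fun i => ?_, fun i => ?_, fun a b hab => ?_⟩, fun i hi => ?_⟩
    · have := h1 i
      dsimp only; split_ifs <;> omega
    · have := h2 i
      dsimp only; split_ifs <;> omega
    · have := h2 a; have := h2 b
      apply h3
      dsimp only at hab
      split_ifs at hab <;> omega
    · have := h1 i; have := hP i
      dsimp only at hi ⊢
      split_ifs at hi ⊢ <;> grind
  · intro p hp
    obtain ⟨hp, hP⟩ := mem_filter.1 hp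
    obtain ⟨h1, h2, h3⟩ := mem_kSimplices.1 hp
    refine Prod.ext (funext fun i => ?_) (funext fun i => ?_)
    · have := h2 i; have := hP i
      dsimp only; grind
    · have := h2 i
      dsimp only; grind
  · intro p hp
    obtain ⟨hp, hP⟩ := mem_filter.1 hp
    obtain ⟨h1, h2, h3⟩ := mem_kSimplices.1 hp
    refine Prod.ext (funext fun i => ?_) (funext fun i => ?_)
    · have := h2 i; have := hP i
      dsimp only; grind
    · have := h2 i
      dsimp only; grind
  · intro p hp
    obtain ⟨hp, hP⟩ := mem_filter.1 hp
    obtain ⟨h1, h2, h3⟩ := mem_kSimplices.1 hp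
    refine if_congr ?_ rfl rfl
    unfold Door
    have : ∀ j, j < n + 1 → vtx (fun i => if p.2 i = 0 then p.1 i + 1 else p.1 i)
        (fun i => if p.2 i = 0 then n else p.2 i - 1) j = vtx p.1 p.2 (j + 1) := by
      intro j hj
      funext i
      simp only [vtx]
      split_ifs <;> omega
    have e : ((range (n + 1 + 1)).erase 0).image (fun j => l (vtx p.1 p.2 j)) =
        ((range (n + 1 + 1)).erase (n + 1)).image
        (fun j => l (vtx (fun i => if p.2 i = 0 then p.1 i + 1 else p.1 i)
        (fun i => if p.2 i = 0 then n else p.2 i - 1) j)) := by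
      ext y
      simp only [mem_image, mem_erase, mem_range]
      constructor
      · rintro ⟨j, ⟨hj, hj'⟩, rfl⟩
        refine ⟨j - 1, ⟨by omega, by omega⟩, ?_⟩
        rw [this (j - 1) (by omega)]
        congr 2; omega
      · rintro ⟨j, ⟨hj, hj'⟩, rfl⟩
        refine ⟨j + 1, ⟨by omega, by omega⟩, ?_⟩
        rw [this j (by omega)]
    rw [e]

open Classical in
theorem boundary_zero {n m : ℕ} (hm : 0 < m) (l : (Fin (n + 1) → ℕ) → ℕ)
    (h0 : ∀ v (i : Fin _), v i = 0 → l v ≤ (i : ℕ)) :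
    ∑ p ∈ (kSimplices (n + 1) m).filter (fun p => ¬ ∀ i, p.2 i = n → 0 < p.1 i),
        (if Door l p (n + 1) then (1 : ZMod 2) else 0)
      = ∑ p ∈ kSimplices n m, (if Full (fun v => l (Fin.snoc v 0)) p then (1 : ZMod 2) else 0) := by
  symm
  have hv : ∀ (b τ : Fin n → ℕ) (j : ℕ), j ≤ n → vtx (Fin.snoc b 0 : Fin (n+1) → ℕ) (Fin.snoc τ n : Fin (n+1) → ℕ) j
      = Fin.snoc (vtx b τ j) 0 := by
    intro b τ j hj
    funext i
    refine Fin.lastCases ?_ (fun i => ?_) i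
    · simp [vtx]; omega
    · simp [vtx]
  have hdoor : ∀ p : (Fin n → ℕ) × (Fin n → ℕ), Full (fun v => l (Fin.snoc v 0)) p ↔
      Door l (Fin.snoc p.1 0, Fin.snoc p.2 n) (n + 1) := by
    intro p
    unfold Full Door
    have e : (range (n + 1 + 1)).erase (n + 1) = range (n + 1) := by
      ext; simp; omega
    rw [e]
    have : (range (n + 1)).image (fun j => l (vtx (Fin.snoc p.1 0 : Fin (n+1) → ℕ)
        (Fin.snoc p.2 n : Fin (n+1) → ℕ) j)) =
        (range (n + 1)).image (fun j => l (Fin.snoc (vtx p.1 p.2 j) 0)) := by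
      apply image_congr
      intro j hj
      have : j < n + 1 := by simpa using hj
      simp only
      rw [hv _ _ _ (by omega)]
    rw [this]
  refine Finset.sum_of_injOn
    (fun p => ((Fin.snoc p.1 0 : Fin (n+1) → ℕ), (Fin.snoc p.2 n : Fin (n+1) → ℕ))) ?_ ?_ ?_ ?_
  · intro p _ q _ h
    obtain ⟨h1, h2⟩ := Prod.ext_iff.1 h
    dsimp only at h1 h2
    refine Prod.ext ?_ ?_
    · exact (Fin.snoc_inj.1 h1).1
    · exact (Fin.snoc_inj.1 h2).1
  · intro p hp
    obtain ⟨h1, h2, h3⟩ := mem_kSimplices.1 hp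
    refine mem_coe.2 (mem_filter.2 ⟨mem_kSimplices.2 ⟨fun i => ?_, fun i => ?_, ?_⟩, ?_⟩)
    · refine Fin.lastCases ?_ (fun i => ?_) i
      · simpa using hm
      · simpa using h1 i
    · refine Fin.lastCases ?_ (fun i => ?_) i
      · simp
      · simpa using (h2 i).trans (Nat.lt_succ_self n)
    · rw [Fin.snoc_injective_iff]
      refine ⟨h3, ?_⟩
      rintro ⟨i, hi⟩
      exact absurd (h2 i) (by omega)
    · intro h
      have := h (Fin.last n)
      simp at this
  · intro p hp hp'
    rw [if_neg]
    intro hd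
    obtain ⟨hp, hQ⟩ := mem_filter.1 hp
    obtain ⟨h1, h2, h3⟩ := mem_kSimplices.1 hp
    push Not at hQ
    obtain ⟨i, hi, hi0⟩ := hQ
    have hi0 : p.1 i = 0 := by omega
    have hin : i = Fin.last n := by
      unfold Door at hd
      have : n ∈ range (n + 1) := by simp
      rw [← hd] at this
      obtain ⟨j, hj, hjn⟩ := mem_image.1 this
      have hj' : j < n + 1 := by
        have := mem_erase.1 hj
        simp at this; omega
      have := h0 (vtx p.1 p.2 j) i (by simp [vtx, hi0, hi]; omega)
      have := i.2
      apply Fin.ext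
      simp; omega
    subst hin
    apply hp'
    refine ⟨((fun i => p.1 i.castSucc), (fun i => p.2 i.castSucc)), mem_coe.2 (mem_kSimplices.2 ⟨fun i => h1 _, fun i => ?_, ?_⟩), ?_⟩
    · have := h2 i.castSucc
      have h4 : p.2 i.castSucc ≠ p.2 (Fin.last n) := fun h => by
        have := h3 h
        exact absurd this (Fin.castSucc_lt_last i).ne
      show p.2 i.castSucc < n
      omega
    · intro a b hab
      exact Fin.castSucc_injective _ (h3 hab)
    · refine Prod.ext ?_ ?_
      · simp only; rw [← hi0]; exact Fin.snoc_init_self p.1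
      · have h5 := Fin.snoc_init_self p.2
        rw [hi] at h5
        exact h5
  · intro p hp
    exact if_congr (hdoor p) rfl rfl

open Classical in
theorem kuhn (N m : ℕ) (hm : 0 < m) : ∀ (l : (Fin N → ℕ) → ℕ) (hl : ∀ v, l v ≤ N)
    (h0 : ∀ v (i : Fin _), v i = 0 → l v ≤ (i : ℕ)) (h1 : ∀ v (i : Fin N), v i = m → l v ≠ i),
    ∑ p ∈ kSimplices N m, (if Full l p then (1 : ZMod 2) else 0) = 1 := by
  induction N with
  | zero =>
    intro l hl h0 h1
    have : kSimplices 0 m = {(Fin.elim0, Fin.elim0)} := by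
      ext p
      rw [mem_kSimplices]
      simp only [mem_singleton]
      constructor
      · intro _
        exact Subsingleton.elim _ _
      · intro _
        exact ⟨fun i => i.elim0, fun i => i.elim0, fun i => i.elim0⟩
    rw [this, sum_singleton, if_pos]
    unfold Full
    have : ∀ v, l v = 0 := fun v => by have := hl v; omega
    simp [this]
  | succ n ih =>
    intro l hl h0 h1
    have hA : ∀ p ∈ kSimplices (n + 1) m, (if Full l p then (1 : ZMod 2) else 0) =
        ∑ k ∈ range (n + 1 + 1), if Door l p k then (1 : ZMod 2) else 0 := by
      intro p _
      have := (count_doors (n + 1) (fun j => l (vtx p.1 p.2 j)) (fun j => hl _)).symm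
      unfold Full Door
      convert! this
    rw [Finset.sum_congr rfl hA, Finset.sum_comm, Finset.sum_range_succ, Finset.sum_range_succ',
      Finset.sum_eq_zero (s := range n), zero_add]
    · rw [← Finset.sum_filter_add_sum_filter_not (kSimplices (n + 1) m) (fun p => ∀ i, p.2 i = n → 0 < p.1 i)
        (fun p => if Door l p (n + 1) then (1 : ZMod 2) else 0),
        ← Finset.sum_filter_add_sum_filter_not (kSimplices (n + 1) m)
          (fun p => ∀ i, p.2 i = 0 → p.1 i + 1 < m)
        (fun p => if Door l p 0 then (1 : ZMod 2) else 0), outer_match, boundary_zero hm l h0, ih]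
      · rw [Finset.sum_eq_zero (s := (kSimplices (n + 1) m).filter (fun p => ¬ ∀ i, p.2 i = 0 → p.1 i + 1 < m))]
        · generalize (∑ p ∈ (kSimplices (n + 1) m).filter (fun p => ∀ i, p.2 i = n → 0 < p.1 i),
            (if Door l p (n + 1) then (1 : ZMod 2) else 0)) = z
          revert z; decide
        · intro p hp
          rw [if_neg]
          intro hd
          obtain ⟨hp, hP⟩ := mem_filter.1 hp
          obtain ⟨g1, g2, g3⟩ := mem_kSimplices.1 hp
          push Not at hP
          obtain ⟨i, hi, him⟩ := hP
          unfold Door at hd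
          have : (i : ℕ) ∈ range (n + 1) := mem_range.2 i.2
          rw [← hd] at this
          obtain ⟨j, hj, hjn⟩ := mem_image.1 this
          have hj' : j ≠ 0 := (mem_erase.1 hj).1
          refine h1 _ i ?_ hjn
          have := g1 i
          simp only [vtx, hi]
          rw [if_pos (by omega)]
          omega
      · intro v
        have := h0 (Fin.snoc v 0) (Fin.last n) (by simp)
        simpa using this
      · intro v i hv
        have := h0 (Fin.snoc v 0) i.castSucc (by simpa using hv)
        simpa using this
      · intro v i hv
        have := h1 (Fin.snoc v 0) i.castSucc (by simpa using hv)
        simpa using this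
    · intro k hk
      exact inner_cancel l (k + 1) (by omega) (by simp at hk; omega)

/-- Kuhn's cubical version of Sperner's lemma. -/
theorem exists_cube (N m : ℕ) (hm : 0 < m) (l : (Fin N → ℕ) → ℕ) (hl : ∀ v, l v ≤ N)
    (h0 : ∀ v (i : Fin _), v i = 0 → l v ≤ (i : ℕ)) (h1 : ∀ v (i : Fin N), v i = m → l v ≠ i) :
    ∃ b : Fin N → ℕ, (∀ i, b i < m) ∧ ∀ L ≤ N, ∃ v : Fin N → ℕ,
      (∀ i, b i ≤ v i ∧ v i ≤ b i + 1) ∧ l v = L := by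
  classical
  have h := kuhn N m hm l hl h0 h1
  have : ∃ p ∈ kSimplices N m, Full l p := by
    by_contra hc
    push Not at hc
    rw [Finset.sum_eq_zero] at h
    · exact absurd h (by decide)
    · intro p hp; rw [if_neg (hc p hp)]
  obtain ⟨p, hp, hF⟩ := this
  refine ⟨p.1, (mem_kSimplices.1 hp).1, fun L hL => ?_⟩
  have : L ∈ range (N + 1) := by simp; omega
  rw [← hF] at this
  obtain ⟨j, -, hj⟩ := mem_image.1 this
  refine ⟨_, fun i => ?_, hj⟩
  simp only [vtx]
  split_ifs <;> omega

end KuhnSperner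

section Lebesgue

/-- Lebesgue covering theorem for the cube. -/
theorem lebesgue_cube (N : ℕ) (W : Set (Set (Fin N → unitInterval))) (hW : ∀ w ∈ W, IsOpen w)
    (hcov : ⋃₀ W = Set.univ)
    (hface : ∀ w ∈ W, ∀ i, ∀ x ∈ w, ∀ y ∈ w, x i = 0 → y i = 1 → False) :
    ∃ x, (N : ℕ∞) + 1 ≤ {w ∈ W | x ∈ w}.encard := by
  obtain ⟨δ, hδ, hleb⟩ := lebesgue_number_lemma_of_metric_sUnion (s := Set.univ) isCompact_univ hW
    (by rw [hcov])
  choose c hcW hc using fun x => hleb x (Set.mem_univ x)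
  obtain ⟨m', hm'⟩ := exists_nat_one_div_lt hδ
  set m := m' + 1 with hmdef
  have hm : (0 : ℝ) < m := by positivity
  let g : (Fin N → ℕ) → (Fin N → unitInterval) := fun v i =>
    ⟨(min (v i) m : ℕ) / (m : ℝ), by positivity, by
      rw [div_le_one hm]; exact_mod_cast min_le_right _ _⟩
  have hgc : ∀ v, g v ∈ c (g v) := fun v => hc _ (Metric.mem_ball_self hδ)
  let S : Set (Fin N → unitInterval) → Set ℕ := fun w =>
    {k | k = N ∨ ∃ i : Fin N, (i : ℕ) = k ∧ ∃ x ∈ w, x i = 0}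
  have hSne : ∀ w, (S w).Nonempty := fun w => ⟨N, Or.inl rfl⟩
  let lab : Set (Fin N → unitInterval) → ℕ := fun w => sInf (S w)
  obtain ⟨b, hb, hbv⟩ := KuhnSperner.exists_cube N m (Nat.succ_pos _) (fun v => lab (c (g v)))
    (fun v => Nat.sInf_le (Or.inl rfl))
    (fun v i hv => Nat.sInf_le (Or.inr ⟨i, rfl, g v, hgc v, by
      apply Subtype.ext; simp [g, hv]⟩))
    (fun v i hv hl => by
      have hmem : lab (c (g v)) ∈ S (c (g v)) := Nat.sInf_mem (hSne _)
      have hl : lab (c (g v)) = i := hl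
      rw [hl] at hmem
      rcases hmem with h | ⟨j, hj, x, hx, hxj⟩
      · exact absurd i.2 (by omega)
      · obtain rfl : j = i := Fin.ext hj
        refine hface _ (hcW _) j x hx (g v) (hgc v) hxj ?_
        apply Subtype.ext
        simp only [g, hv, min_self]
        exact div_self hm.ne')
  choose! V hV hVl using hbv
  refine ⟨g b, ?_⟩
  have hinj : Function.Injective (fun L : Fin (N + 1) => c (g (V L))) := by
    intro L L' h
    have h1 := hVl L (Nat.lt_succ_iff.1 L.2)
    have h2 := hVl L' (Nat.lt_succ_iff.1 L'.2)
    simp only at h h1 h2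
    rw [h, h2] at h1
    exact Fin.ext h1.symm
  have hsub : Set.range (fun L : Fin (N + 1) => c (g (V L))) ⊆ {w ∈ W | g b ∈ w} := by
    rintro _ ⟨L, rfl⟩
    refine ⟨hcW _, hc _ ?_⟩
    rw [Metric.mem_ball, dist_pi_lt_iff hδ]
    intro i
    have h1 := hV L (Nat.lt_succ_iff.1 L.2) i
    have h2 := hb i
    have e1 : min (b i) m = b i := min_eq_left h2.le
    have e2 : min (V L i) m = V L i := min_eq_left (by omega)
    rw [Subtype.dist_eq, Real.dist_eq]
    simp only [g, e1, e2]
    rw [← sub_div, abs_div, abs_of_pos hm]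
    refine lt_of_le_of_lt ?_ hm'
    rw [hmdef]
    push_cast
    gcongr
    have h3 : (b i : ℝ) ≤ V L i := by exact_mod_cast h1.1
    have h4 : (V L i : ℝ) ≤ b i + 1 := by exact_mod_cast h1.2
    rw [abs_le]; constructor <;> linarith
  calc (N : ℕ∞) + 1 = (Set.range (fun L : Fin (N + 1) => c (g (V L)))).encard := by
        rw [← Set.image_univ, hinj.encard_image]
        simp
    _ ≤ _ := Set.encard_le_encard hsub

/-- A space into which every cube can be mapped injectively has infinite covering dimension. -/
theorem not_covDimLE_of_cube {Y : Type*} [TopologicalSpace Y] [T2Space Y] (n : ℕ)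
    (Φ : (Fin (n + 1) → unitInterval) → Y) (hΦ : Continuous Φ) (hinj : Function.Injective Φ) :
    ¬ CovDimLE Y n := by
  intro hdim
  obtain ⟨V, hVo, hVc, hVr, hVn⟩ := hdim
    {u | IsOpen u ∧ ∀ i, ∀ x, Φ x ∈ u → ∀ y, Φ y ∈ u → x i = 0 → y i = 1 → False}
    (fun u hu => hu.1) (by
      refine Set.eq_univ_of_forall fun p => ?_
      let F : Fin (n + 1) → unitInterval → Set Y := fun i a => Φ '' {x | x i = a}
      have hF : ∀ i a, IsClosed (F i a) := fun i a =>
        ((isClosed_eq (continuous_apply i) continuous_const).isCompact.image hΦ).isClosed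
      have hch : ∀ i, ∃ a : unitInterval, (a = 0 ∨ a = 1) ∧ p ∉ F i a := by
        intro i
        by_cases h : p ∈ F i 0
        · refine ⟨1, Or.inr rfl, ?_⟩
          rintro ⟨y, hy, rfl⟩
          obtain ⟨x, hx, hxy⟩ := h
          rw [hinj hxy] at hx
          have : (0 : unitInterval) = 1 := hx.symm.trans hy
          exact zero_ne_one this
        · exact ⟨0, Or.inl rfl, h⟩
      choose a ha hpa using hch
      refine ⟨⋂ i, (F i (a i))ᶜ, ⟨isOpen_iInter_of_finite fun i => (hF i _).isOpen_compl, ?_⟩, ?_⟩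
      · intro i x hx y hy hx0 hy1
        have hx := Set.mem_iInter.1 hx i
        have hy := Set.mem_iInter.1 hy i
        rcases ha i with h | h
        · exact hx ⟨x, by simp [hx0, h], rfl⟩
        · exact hy ⟨y, by simp [hy1, h], rfl⟩
      · exact Set.mem_iInter.2 hpa)
  obtain ⟨x, hx⟩ := lebesgue_cube (n + 1) ((fun w => Φ ⁻¹' w) '' V)
    (by rintro _ ⟨w, hw, rfl⟩; exact (hVo w hw).preimage hΦ)
    (by
      refine Set.eq_univ_of_forall fun x => ?_
      have : Φ x ∈ ⋃₀ V := by rw [hVc]; trivial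
      obtain ⟨w, hw, hxw⟩ := this
      exact ⟨_, ⟨w, hw, rfl⟩, hxw⟩)
    (by
      rintro _ ⟨w, hw, rfl⟩ i x hx y hy
      obtain ⟨u, hu, hwu⟩ := hVr w hw
      exact hu.2 i x (hwu hx) y (hwu hy))
  have h1 : {w ∈ (fun w => Φ ⁻¹' w) '' V | x ∈ w} ⊆ (fun w => Φ ⁻¹' w) '' {w ∈ V | Φ x ∈ w} := by
    rintro _ ⟨⟨w, hw, rfl⟩, hxw⟩
    exact ⟨w, ⟨hw, hxw⟩, rfl⟩
  have h2 := (hx.trans (Set.encard_le_encard h1)).trans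
    ((Set.encard_image_le _ _).trans (hVn (Φ x)))
  have h3 : (n + 1 : ℕ) + 1 ≤ n + 1 := by exact_mod_cast h2
  omega

end Lebesgue

section Geometry

open TopologicalSpace

theorem mem_GHConnected_of_isConnected {E : Type*} [MetricSpace E] (K : NonemptyCompacts E)
    (hK : IsConnected (K : Set E)) : K.toGHSpace ∈ GHConnected := by
  have h : toGHSpace K.toGHSpace.Rep = toGHSpace K := GHSpace.toGHSpace_rep _
  obtain ⟨e⟩ := toGHSpace_eq_toGHSpace_iff_isometryEquiv.1 h
  have : ConnectedSpace K := isConnected_iff_connectedSpace.1 hK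
  exact e.symm.surjective.connectedSpace e.symm.continuous

theorem ghConnected_pathConnected : PathConnectedSpace ↥GHConnected := by
  rw [← isPathConnected_iff_pathConnectedSpace]
  let E := lp (fun _ : ℕ => ℝ) ⊤
  let Z : NonemptyCompacts E := {0}
  have hZ : Z.toGHSpace ∈ GHConnected :=
    mem_GHConnected_of_isConnected Z (by simpa [Z] using isConnected_singleton)
  refine ⟨Z.toGHSpace, hZ, fun {p} hp => ?_⟩
  let K : NonemptyCompacts E := Quotient.out p
  have hKp : K.toGHSpace = p := p.toGHSpace_rep
  have hKc : IsConnected (K : Set E) := by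
    rw [isConnected_iff_connectedSpace]
    exact hp
  let F : unitInterval → NonemptyCompacts E := fun s =>
    K.map (fun x => (s : ℝ) • x) (by fun_prop)
  have hF : Continuous F := by
    refine Continuous.nonemptyCompacts_map' (f := fun _ : unitInterval => K)
      (g := fun s x => (s : ℝ) • x) continuous_const ?_
    simp only [Function.uncurry_def]
    fun_prop
  have hF0 : F 0 = Z := by
    apply NonemptyCompacts.ext
    have : (K : Set E).Nonempty := K.nonempty
    simp [F, Z, NonemptyCompacts.coe_map]
    exact this.image_const 0
  have hF1 : F 1 = K := by
    apply NonemptyCompacts.ext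
    simp [F, NonemptyCompacts.coe_map]
  refine ⟨⟨⟨fun s => (F s).toGHSpace, toGHSpace_continuous.comp hF⟩, ?_, ?_⟩, fun s => ?_⟩
  · simp only [hF0]
  · simp only [hF1, hKp]
  · refine mem_GHConnected_of_isConnected (F s) ?_
    simp only [F, NonemptyCompacts.coe_map]
    exact hKc.image _ (by fun_prop)

/-- The profile of the horns. -/
noncomputable def horn {N : ℕ} (t : Fin N → unitInterval) (r : ℝ) : ℝ :=
  (∑ i, (t i : ℝ) * r ^ ((i : ℕ) + 1)) / N

theorem horn_nonneg {N : ℕ} (t : Fin N → unitInterval) {r : ℝ} (hr : 0 ≤ r) : 0 ≤ horn t r := by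
  refine div_nonneg (Finset.sum_nonneg fun i _ => mul_nonneg (t i).2.1 (by positivity)) (by positivity)

theorem horn_le {N : ℕ} (t : Fin N → unitInterval) {r : ℝ} (hr : 0 ≤ r) (hr1 : r ≤ 1) :
    horn t r ≤ r := by
  unfold horn
  rcases Nat.eq_zero_or_pos N with rfl | hN
  · simpa using hr
  have hN' : (0 : ℝ) < N := by exact_mod_cast hN
  rw [div_le_iff₀ hN']
  calc ∑ i, (t i : ℝ) * r ^ ((i : ℕ) + 1) ≤ ∑ i : Fin N, r := by
        refine Finset.sum_le_sum fun i _ => ?_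
        have h1 : r ^ ((i : ℕ) + 1) ≤ r := pow_le_of_le_one hr hr1 (by omega)
        have h2 := (t i).2.2
        have h3 := (t i).2.1
        have h4 : 0 ≤ r ^ ((i : ℕ) + 1) := by positivity
        nlinarith
    _ = r * N := by simp [mul_comm]

theorem horn_injective {N : ℕ} (hN : 0 < N) {L : ℝ} (hL : 0 < L) (t s : Fin N → unitInterval)
    (h : ∀ r, 0 < r → r < L → horn t r = horn s r) : t = s := by
  have hN' : (N : ℝ) ≠ 0 := by exact_mod_cast hN.ne'
  let P : Polynomial ℝ := ∑ i : Fin N, Polynomial.C ((t i : ℝ) - s i) * Polynomial.X ^ ((i : ℕ) + 1)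
  have hP : P = 0 := by
    apply Polynomial.eq_zero_of_infinite_isRoot
    refine (Set.Ioo_infinite hL).mono ?_
    rintro r ⟨h0, h1⟩
    have h2 := h r h0 h1
    unfold horn at h2
    rw [div_left_inj' hN'] at h2
    simp only [P, Set.mem_setOf_eq, Polynomial.IsRoot, Polynomial.eval_finset_sum,
      Polynomial.eval_mul, Polynomial.eval_C, Polynomial.eval_pow, Polynomial.eval_X, sub_mul,
      Finset.sum_sub_distrib]
    rw [h2, sub_self]
  funext i
  have h3 : P.coeff ((i : ℕ) + 1) = (t i : ℝ) - s i := by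
    simp only [P, Polynomial.finset_sum_coeff, Polynomial.coeff_C_mul_X_pow]
    rw [Finset.sum_eq_single i]
    · simp
    · intro j _ hj
      rw [if_neg]
      intro h
      exact hj (Fin.ext (by omega))
    · simp
  rw [hP] at h3
  apply Subtype.ext
  simp at h3
  linarith

variable {X : Type} [MetricSpace X]

/-- A point of the ambient space. -/
def pt (x : X) (u v : ℝ) : WithLp 1 (X × (ℝ × ℝ)) := WithLp.toLp 1 (x, (u, v))

theorem dist_pt (x x' : X) (u v u' v' : ℝ) :
    dist (pt x u v) (pt x' u' v') = dist x x' + max |u - u'| |v - v'| := by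
  rw [WithLp.prod_dist_eq_add (by simp)]
  simp [pt, Prod.dist_eq, Real.dist_eq]

theorem continuous_pt : Continuous (fun q : X × (ℝ × ℝ) => pt q.1 q.2.1 q.2.2) :=
  WithLp.prod_continuous_toLp 1 X (ℝ × ℝ)

def sgn (e : Bool) : ℝ := if e then 1 else -1

/-- Parametrization of a horn. -/
noncomputable def hornMap {N : ℕ} (z : Bool → X) (L : ℝ) (e : Bool) (t : Fin N → unitInterval)
    (a : unitInterval × unitInterval) : WithLp 1 (X × (ℝ × ℝ)) :=
  pt (z e) (sgn e * (L - L * a.1)) (a.2 * horn t (L * a.1))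

theorem continuous_hornMap {N : ℕ} (z : Bool → X) (L : ℝ) (e : Bool) :
    Continuous (Function.uncurry (hornMap (N := N) z L e)) := by
  refine continuous_pt.comp (Continuous.prodMk continuous_const (Continuous.prodMk ?_ ?_))
  · fun_prop
  · unfold horn
    fun_prop

variable [CompactSpace X] [Nonempty X]

noncomputable def baseK (X : Type) [MetricSpace X] [CompactSpace X] [Nonempty X] :
    NonemptyCompacts (WithLp 1 (X × (ℝ × ℝ))) :=
  (⊤ : NonemptyCompacts X).map (fun x => pt x 0 0)
    (continuous_pt.comp (by fun_prop : Continuous fun x : X => (x, ((0 : ℝ), (0 : ℝ)))))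

noncomputable def hornK {N : ℕ} (z : Bool → X) (L : ℝ) (e : Bool) (t : Fin N → unitInterval) :
    NonemptyCompacts (WithLp 1 (X × (ℝ × ℝ))) :=
  (⊤ : NonemptyCompacts (unitInterval × unitInterval)).map (hornMap z L e t)
    ((continuous_hornMap z L e).comp (by fun_prop : Continuous fun a => (t, a)))

/-- The space `X` with two horns. -/
noncomputable def horned {N : ℕ} (z : Bool → X) (L : ℝ) (t : Fin N → unitInterval) :
    NonemptyCompacts (WithLp 1 (X × (ℝ × ℝ))) :=
  (baseK X ⊔ hornK z L true t) ⊔ hornK z L false t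

theorem continuous_horned {N : ℕ} (z : Bool → X) (L : ℝ) :
    Continuous (horned (N := N) z L) := by
  have h : ∀ e, Continuous (hornK (N := N) z L e) := fun e =>
    Continuous.nonemptyCompacts_map' (f := fun _ : Fin N → unitInterval =>
      (⊤ : NonemptyCompacts (unitInterval × unitInterval)))
      (g := hornMap z L e) continuous_const (continuous_hornMap z L e)
  exact (continuous_const.sup (h true)).sup (h false)

theorem coe_baseK : (baseK X : Set (WithLp 1 (X × (ℝ × ℝ)))) = Set.range (fun x : X => pt x 0 0) := by
  simp [baseK, NonemptyCompacts.coe_map]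

theorem coe_hornK {N : ℕ} (z : Bool → X) (L : ℝ) (e : Bool) (t : Fin N → unitInterval) :
    (hornK z L e t : Set (WithLp 1 (X × (ℝ × ℝ)))) = Set.range (hornMap z L e t) := by
  show hornMap z L e t '' Set.univ = _
  exact Set.image_univ

theorem mem_horned {N : ℕ} {z : Bool → X} {L : ℝ} {t : Fin N → unitInterval}
    {q : WithLp 1 (X × (ℝ × ℝ))} :
    q ∈ (horned z L t : Set _) ↔ (∃ x : X, pt x 0 0 = q) ∨ ∃ e a, hornMap z L e t a = q := by
  simp only [horned, NonemptyCompacts.coe_sup, coe_baseK, coe_hornK, Set.mem_union, Set.mem_range,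
    Bool.exists_bool]
  tauto

theorem horned_cases {N : ℕ} {z : Bool → X} {L : ℝ} (hL : 0 ≤ L) {t : Fin N → unitInterval}
    {q : WithLp 1 (X × (ℝ × ℝ))} (hq : q ∈ (horned z L t : Set _)) :
    (∃ x : X, q = pt x 0 0) ∨ ∃ e r v, 0 ≤ r ∧ r ≤ L ∧ 0 ≤ v ∧ v ≤ horn t r ∧
      q = pt (z e) (sgn e * (L - r)) v := by
  rcases mem_horned.1 hq with ⟨x, rfl⟩ | ⟨e, ⟨a, b⟩, rfl⟩
  · exact Or.inl ⟨x, rfl⟩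
  · have h0 : 0 ≤ L * a := mul_nonneg hL a.2.1
    refine Or.inr ⟨e, L * a, b * horn t (L * a), h0, mul_le_of_le_one_right hL a.2.2,
      mul_nonneg b.2.1 (horn_nonneg t h0), mul_le_of_le_one_left (horn_nonneg t h0) b.2.2, rfl⟩

theorem horned_mem {N : ℕ} (z : Bool → X) {L : ℝ} (hL : 0 < L) (t : Fin N → unitInterval)
    (e : Bool) {r : ℝ} (hr : 0 ≤ r) (hrL : r ≤ L) (b : unitInterval) :
    pt (z e) (sgn e * (L - r)) (b * horn t r) ∈ (horned z L t : Set _) := by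
  refine mem_horned.2 (Or.inr ⟨e, (⟨r / L, by positivity, by rw [div_le_one hL]; exact hrL⟩, b), ?_⟩)
  have : L * (r / L) = r := by field_simp
  simp [hornMap, this]

theorem horn_zero {N : ℕ} (t : Fin N → unitInterval) : horn t 0 = 0 := by
  simp [horn]

theorem horned_tops {N : ℕ} {z : Bool → X} {L D : ℝ} (hL : 0 < L) (hL1 : L ≤ 1)
    (hD : ∀ x y : X, dist x y ≤ D) {t : Fin N → unitInterval}
    {q q' : WithLp 1 (X × (ℝ × ℝ))} (hq : q ∈ (horned z L t : Set _))
    (hq' : q' ∈ (horned z L t : Set _)) (h : dist q q' = D + 2 * L) :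
    ∃ e, q = pt (z e) (sgn e * L) 0 := by
  have gen : ∀ q ∈ (horned z L t : Set (WithLp 1 (X × (ℝ × ℝ)))), ∃ x u v, q = pt x u v ∧ |u| ≤ L ∧ 0 ≤ v ∧ v ≤ L ∧
      (|u| = L → ∃ e, q = pt (z e) (sgn e * L) 0) := by
    intro q hq
    rcases horned_cases hL.le hq with ⟨x, rfl⟩ | ⟨e, r, v, h1, h2, h3, h4, rfl⟩
    · exact ⟨x, 0, 0, rfl, by simpa using hL.le, le_rfl, hL.le, fun h => by simp at h; linarith⟩
    · have h5 := horn_le t h1 (h2.trans hL1)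
      have habs : |sgn e * (L - r)| = L - r := by
        rw [abs_mul, abs_of_nonneg (by linarith : 0 ≤ L - r)]
        cases e <;> simp [sgn]
      refine ⟨_, _, _, rfl, by rw [habs]; linarith, h3, by linarith, fun h => ⟨e, ?_⟩⟩
      rw [habs] at h
      have hr : r = 0 := by linarith
      subst hr
      rw [horn_zero] at h4
      have hv : v = 0 := le_antisymm h4 h3
      rw [hv, sub_zero]
  obtain ⟨x, u, v, rfl, hu, hv0, hv1, hc⟩ := gen q hq
  obtain ⟨x', u', v', rfl, hu', hv0', hv1', -⟩ := gen q' hq'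
  apply hc
  rw [dist_pt] at h
  have h1 := hD x x'
  rw [abs_le] at hu hu'
  rcases le_total |u - u'| |v - v'| with h2 | h2
  · rw [max_eq_right h2] at h
    have : |v - v'| ≤ L := by rw [abs_le]; constructor <;> linarith
    linarith
  · rw [max_eq_left h2] at h
    rcases abs_cases (u - u') with ⟨h3, _⟩ | ⟨h3, _⟩
    · rw [abs_of_nonneg] <;> linarith
    · rw [abs_of_nonpos] <;> linarith

theorem horned_width {N : ℕ} {z : Bool → X} {L : ℝ} (hL : 0 < L) (hL1 : L ≤ 1)
    {t : Fin N → unitInterval} {e : Bool} {r : ℝ} (hr : r < L)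
    {q q' : WithLp 1 (X × (ℝ × ℝ))} (hq : q ∈ (horned z L t : Set _))
    (hq' : q' ∈ (horned z L t : Set _)) (h : dist (pt (z e) (sgn e * L) 0) q = r)
    (h' : dist (pt (z e) (sgn e * L) 0) q' = r) : dist q q' ≤ horn t r := by
  have gen : ∀ q ∈ (horned z L t : Set (WithLp 1 (X × (ℝ × ℝ)))),
      dist (pt (z e) (sgn e * L) 0) q = r →
      ∃ v, 0 ≤ v ∧ v ≤ horn t r ∧ q = pt (z e) (sgn e * (L - r)) v := by
    intro q hq h
    rcases horned_cases hL.le hq with ⟨x, rfl⟩ | ⟨e', r', v, h1, h2, h3, h4, rfl⟩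
    · exfalso
      rw [dist_pt] at h
      have h1 : |sgn e * L - 0| = L := by
        rw [sub_zero, abs_mul, abs_of_pos hL]; cases e <;> simp [sgn]
      have h2 := le_max_left |sgn e * L - 0| |(0 : ℝ) - 0|
      have h3 := dist_nonneg (x := z e) (y := x)
      linarith
    · rw [dist_pt] at h
      by_cases hee : e' = e
      · subst hee
        have h5 := horn_le t h1 (h2.trans hL1)
        have h6 : |sgn e' * L - sgn e' * (L - r')| = r' := by
          rw [← mul_sub, abs_mul, sub_sub_cancel, abs_of_nonneg h1]; cases e' <;> simp [sgn]
        have h7 : |0 - v| = v := by rw [zero_sub, abs_neg, abs_of_nonneg h3]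
        rw [h6, h7, dist_self, max_eq_left (by linarith), zero_add] at h
        subst h
        exact ⟨v, h3, h4, rfl⟩
      · exfalso
        have h5 : L ≤ |sgn e * L - sgn e' * (L - r')| := by
          cases e <;> cases e' <;> simp [sgn] at hee ⊢
          · rw [abs_of_nonpos] <;> linarith
          · rw [abs_of_nonneg] <;> linarith
        have h6 := le_max_left |sgn e * L - sgn e' * (L - r')| |(0 : ℝ) - v|
        have h7 := dist_nonneg (x := z e) (y := z e')
        linarith
  obtain ⟨v, hv0, hv1, rfl⟩ := gen q hq h
  obtain ⟨v', hv0', hv1', rfl⟩ := gen q' hq' h'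
  rw [dist_pt, dist_self, zero_add, sub_self, abs_zero]
  refine max_le (hv0.trans hv1) ?_
  rw [abs_le]; constructor <;> linarith

theorem horn_le_of_isometry {N : ℕ} {z : Bool → X} {L : ℝ} (hL : 0 < L) (hL1 : L ≤ 1)
    (hD : ∀ x y : X, dist x y ≤ dist (z true) (z false)) {t s : Fin N → unitInterval}
    (φ : (horned z L t) ≃ᵢ (horned z L s)) {r : ℝ} (hr0 : 0 < r) (hr : r < L) :
    horn t r ≤ horn s r := by
  have top : ∀ e, pt (z e) (sgn e * L) 0 ∈ (horned z L t : Set _) := by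
    intro e
    have := horned_mem z hL t e le_rfl hL.le 0
    simpa using this
  have hd : dist (φ ⟨_, top true⟩ : WithLp 1 (X × (ℝ × ℝ))) (φ ⟨_, top false⟩)
      = dist (z true) (z false) + 2 * L := by
    rw [← Subtype.dist_eq, φ.dist_eq, Subtype.dist_eq, dist_pt]
    simp only [sgn, if_true, Bool.false_eq_true, if_false, sub_self, abs_zero]
    rw [max_eq_left (abs_nonneg _), abs_of_nonneg] <;> linarith
  obtain ⟨e, he⟩ := horned_tops hL hL1 hD (φ ⟨_, top true⟩).2 (φ ⟨_, top false⟩).2 hd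
  have m0 := horned_mem z hL t true hr0.le hr.le 0
  have m1 := horned_mem z hL t true hr0.le hr.le 1
  have hn := horn_nonneg t hr0.le
  have hle := horn_le t hr0.le (hr.le.trans hL1)
  have key := horned_width hL hL1 hr (φ ⟨_, m0⟩).2 (φ ⟨_, m1⟩).2 (e := e) (z := z) ?_ ?_
  · rw [← Subtype.dist_eq, φ.dist_eq, Subtype.dist_eq, dist_pt] at key
    refine le_trans ?_ key
    rw [dist_self, zero_add]
    refine le_trans ?_ (le_max_right _ _)
    simp [abs_of_nonneg hn]
  · rw [← he, ← Subtype.dist_eq, φ.dist_eq, Subtype.dist_eq, dist_pt]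
    simp [sgn, abs_of_pos hr0, hr0.le]
  · rw [← he, ← Subtype.dist_eq, φ.dist_eq, Subtype.dist_eq, dist_pt]
    simp [sgn, abs_of_pos hr0, abs_of_nonneg hn, hle]

theorem toGHSpace_baseK : (baseK X).toGHSpace = toGHSpace X := by
  symm
  refine toGHSpace_eq_toGHSpace_iff_isometryEquiv.2 ?_
  have hi : Isometry (fun x : X => pt x 0 0) := by
    refine Isometry.of_dist_eq fun x y => ?_
    rw [dist_pt]; simp
  have e := hi.isometryEquivOnRange
  rw [← coe_baseK] at e
  exact ⟨e⟩

theorem dist_horned {N : ℕ} {z : Bool → X} {L : ℝ} (hL : 0 < L) (hL1 : L ≤ 1)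
    (t : Fin N → unitInterval) : dist (horned z L t) (baseK X) ≤ L := by
  rw [Metric.NonemptyCompacts.dist_eq]
  refine Metric.hausdorffDist_le_of_mem_dist hL.le ?_ ?_
  · intro q hq
    rcases horned_cases hL.le hq with ⟨x, rfl⟩ | ⟨e, r, v, h1, h2, h3, h4, rfl⟩
    · exact ⟨_, by rw [coe_baseK]; exact ⟨x, rfl⟩, by simpa using hL.le⟩
    · refine ⟨pt (z e) 0 0, by rw [coe_baseK]; exact ⟨_, rfl⟩, ?_⟩
      have h5 := horn_le t h1 (h2.trans hL1)
      have habs : |sgn e * (L - r)| = L - r := by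
        rw [abs_mul, abs_of_nonneg (by linarith : 0 ≤ L - r)]
        cases e <;> simp [sgn]
      rw [dist_pt, dist_self, sub_zero, sub_zero, habs, abs_of_nonneg h3, zero_add]
      exact max_le (by linarith) (by linarith)
  · intro q hq
    rw [coe_baseK] at hq
    obtain ⟨x, rfl⟩ := hq
    exact ⟨_, mem_horned.2 (Or.inl ⟨x, rfl⟩), by simpa using hL.le⟩

theorem isConnected_horned [ConnectedSpace X] {N : ℕ} (z : Bool → X) (L : ℝ)
    (t : Fin N → unitInterval) : IsConnected (horned z L t : Set (WithLp 1 (X × (ℝ × ℝ)))) := by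
  have hB : IsConnected (baseK X : Set (WithLp 1 (X × (ℝ × ℝ)))) := by
    rw [coe_baseK]
    exact isConnected_range
      (continuous_pt.comp (by fun_prop : Continuous fun x : X => (x, ((0 : ℝ), (0 : ℝ)))))
  have hH : ∀ e, IsConnected (hornK z L e t : Set (WithLp 1 (X × (ℝ × ℝ)))) := by
    intro e
    rw [coe_hornK]
    exact isConnected_range
      ((continuous_hornMap z L e).comp (by fun_prop : Continuous fun a => (t, a)))
  have hz : ∀ e, pt (z e) 0 0 ∈ (hornK z L e t : Set (WithLp 1 (X × (ℝ × ℝ)))) := by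
    intro e
    rw [coe_hornK]
    exact ⟨(1, 0), by simp [hornMap]⟩
  have hz' : ∀ e, pt (z e) 0 0 ∈ (baseK X : Set (WithLp 1 (X × (ℝ × ℝ)))) := by
    intro e
    rw [coe_baseK]
    exact ⟨_, rfl⟩
  simp only [horned, NonemptyCompacts.coe_sup]
  exact IsConnected.union ⟨_, Or.inl (hz' false), hz false⟩
    (IsConnected.union ⟨_, hz' true, hz true⟩ hB (hH true)) (hH false)

theorem exists_cube_near (p : GHSpace) (hp : p ∈ GHConnected) (N : ℕ) (hN : 0 < N) (ε : ℝ)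
    (hε : 0 < ε) : ∃ Φ : (Fin N → unitInterval) → GHSpace, Continuous Φ ∧ Function.Injective Φ ∧
      ∀ t, Φ t ∈ GHConnected ∧ dist (Φ t) p < ε := by
  have : ConnectedSpace p.Rep := hp
  obtain ⟨⟨a, b⟩, -, hab⟩ := isCompact_univ.exists_isMaxOn (Set.univ_nonempty (α := p.Rep × p.Rep))
    (f := fun q => dist q.1 q.2) continuous_dist.continuousOn
  let z : Bool → p.Rep := fun e => if e then a else b
  have hD : ∀ x y : p.Rep, dist x y ≤ dist (z true) (z false) := fun x y =>
    hab (Set.mem_univ (x, y))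
  obtain ⟨L, hL, hL1, hLε⟩ : ∃ L : ℝ, 0 < L ∧ L ≤ 1 ∧ L < ε :=
    ⟨min 1 (ε / 2), by positivity, min_le_left _ _, (min_le_right _ _).trans_lt (by linarith)⟩
  refine ⟨fun t => (horned z L t).toGHSpace, toGHSpace_continuous.comp (continuous_horned z L),
    ?_, fun t => ⟨mem_GHConnected_of_isConnected _ (isConnected_horned z L t), ?_⟩⟩
  · intro t s h
    obtain ⟨φ⟩ := toGHSpace_eq_toGHSpace_iff_isometryEquiv.1 h
    exact horn_injective hN hL t s fun r h0 h1 => le_antisymm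
      (horn_le_of_isometry hL hL1 hD φ h0 h1) (horn_le_of_isometry hL hL1 hD φ.symm h0 h1)
  · calc dist (horned z L t).toGHSpace p
        = dist (horned z L t).toGHSpace (baseK p.Rep).toGHSpace := by
          rw [toGHSpace_baseK, GHSpace.toGHSpace_rep]
      _ ≤ dist (horned z L t) (baseK p.Rep) := ghDist_le_nonemptyCompacts_dist _ _
      _ ≤ L := dist_horned hL hL1 t
      _ < ε := hLε

end Geometry

/-- The set `𝒞` of all compact connected metric spaces is
path-connected as a subspace of the Gromov–Hausdorff space, and every nonempty
open subset of `𝒞` has infinite covering dimension. -/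
theorem statement4 :
    PathConnectedSpace ↥GHConnected ∧
    ∀ U : Set ↥GHConnected, IsOpen U → U.Nonempty →
      ¬ ∃ n : ℕ, CovDimLE ↥U n := by
  refine ⟨ghConnected_pathConnected, ?_⟩
  rintro U hU ⟨p, hpU⟩ ⟨n, hn⟩
  obtain ⟨ε, hε, hball⟩ := Metric.isOpen_iff.1 hU p hpU
  obtain ⟨Φ, hc, hi, hΦ⟩ := exists_cube_near p.1 p.2 (n + 1) (Nat.succ_pos n) ε hε
  refine not_covDimLE_of_cube n
    (fun t => (⟨⟨Φ t, (hΦ t).1⟩, hball (hΦ t).2⟩ : U)) ?_ ?_ hn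
  · exact (hc.subtype_mk _).subtype_mk _
  · intro t s h
    exact hi (congrArg (fun q : U => (q : GHConnected).1) h)
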